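/- Let γ : ℝ → ℝ² be a smooth closed regular plane curve parametrised by arc length with period L > 0, and let V ∈ ℝ² be a constant vector such that −κ''(s) = ⟨V, ν(s)⟩ for all s ∈ ℝ (γ is a translator for the curve diffusion flow with velocity V). Then V = 0 and γ is a round circle: there exist c ∈ ℝ² and R > 0 with ‖γ(s) − c‖ = R for all s. -/

import Mathlib

open Real MeasureTheory Filter

/-- Euclidean inner product on `ℝ × ℝ`. -/
def innerP (a b : ℝ × ℝ) : ℝ := a.1 * b.1 + a.2 * b.2

/-- Unit normal `ν = (y', -x')` of a plane curve parametrised by arc length. -/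
noncomputable def nuA (γ : ℝ → ℝ × ℝ) (s : ℝ) : ℝ × ℝ :=
  ((deriv γ s).2, -(deriv γ s).1)

/-- Curvature `κ = ⟨γ'', ν⟩` of a plane curve parametrised by arc length. -/
noncomputable def curvA (γ : ℝ → ℝ × ℝ) (s : ℝ) : ℝ :=
  innerP (deriv (deriv γ) s) (nuA γ s)

/-! Write `T = γ'`, so that `T' = κ ν` and `ν' = -κ T`. Along a translator the function
`κ κ' + ⟨V, T⟩` has derivative `κ'² + κ (κ'' + ⟨V, ν⟩) = κ'²`; on a closed curve it is periodic,
hence constant, so `κ' = 0`. The constant `κ` is not zero because a closed curve is not a straight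
line. Therefore the centre of curvature `γ + κ⁻¹ ν` does not move and `γ` runs on a circle of radius
`|κ|⁻¹`. Moreover `⟨V, ν⟩ = -κ'' = 0`; differentiating gives `⟨V, T⟩ = 0` as well, so `V = 0`. -/

theorem eq_of_monotone_of_periodic {α β : Type*} [AddCommGroup α] [LinearOrder α]
    [IsOrderedAddMonoid α] [Archimedean α] [PartialOrder β] {f : α → β} {c : α}
    (hf : Monotone f) (hper : Function.Periodic f c) (hc : 0 < c) (x y : α) : f x = f y := by
  have hle : ∀ a b, f a ≤ f b := fun a b => by
    obtain ⟨n, hn⟩ := Archimedean.arch (a - b) hc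
    calc f a ≤ f (b + n • c) := hf (sub_le_iff_le_add'.1 hn)
      _ = f b := hper.nsmul n b
  exact le_antisymm (hle x y) (hle y x)

theorem eq_zero_of_hasDerivAt_nonneg_of_periodic {f f' : ℝ → ℝ} {L : ℝ}
    (hf : ∀ s, HasDerivAt f (f' s) s) (hf' : ∀ s, 0 ≤ f' s)
    (hper : Function.Periodic f L) (hL : 0 < L) (s : ℝ) : f' s = 0 := by
  have hconst : f = fun _ => f 0 := funext fun t =>
    eq_of_monotone_of_periodic (monotone_of_hasDerivAt_nonneg hf hf') hper hL t 0
  exact (hconst ▸ hf s).unique (hasDerivAt_const s (f 0))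

section NormedSpace

theorem periodic_deriv {𝕜 E : Type*} [NontriviallyNormedField 𝕜] [NormedAddCommGroup E]
    [NormedSpace 𝕜 E] {f : 𝕜 → E} {c : 𝕜} (hf : Function.Periodic f c) :
    Function.Periodic (deriv f) c := fun s => by
  rw [← deriv_comp_add_const, funext hf]

variable {E : Type*} [NormedAddCommGroup E] [NormedSpace ℝ E] {f : ℝ → E}

theorem eq_of_hasDerivAt_zero (hf : ∀ s, HasDerivAt f 0 s) (s t : ℝ) : f s = f t :=
  is_const_of_deriv_eq_zero (fun s => (hf s).differentiableAt) (fun s => (hf s).deriv) s t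

theorem eq_zero_of_hasDerivAt_const_of_periodic {v : E} {L : ℝ} (hf : ∀ s, HasDerivAt f v s)
    (hper : Function.Periodic f L) (hL : L ≠ 0) : v = 0 := by
  have hderiv : ∀ s, HasDerivAt (fun t => f t - t • v) 0 s := fun s => by
    exact ((hf s).sub ((hasDerivAt_id' s).smul_const v)).congr_deriv (by simp)
  have hLv : L • v = 0 := by
    simpa [hper.eq] using eq_of_hasDerivAt_zero hderiv L 0
  exact (smul_eq_zero.1 hLv).resolve_left hL

end NormedSpace

theorem hasDerivAt_innerP {f g : ℝ → ℝ × ℝ} {f' g' : ℝ × ℝ} {s : ℝ}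
    (hf : HasDerivAt f f' s) (hg : HasDerivAt g g' s) :
    HasDerivAt (fun t => innerP (f t) (g t)) (innerP f' (g s) + innerP (f s) g') s := by
  have hf₁ : HasDerivAt (fun t => (f t).1) f'.1 s := hf.fst
  have hf₂ : HasDerivAt (fun t => (f t).2) f'.2 s := hf.snd
  have hg₁ : HasDerivAt (fun t => (g t).1) g'.1 s := hg.fst
  have hg₂ : HasDerivAt (fun t => (g t).2) g'.2 s := hg.snd
  refine ((hf₁.mul hg₁).add (hf₂.mul hg₂)).congr_deriv ?_
  simp only [innerP]
  ring

theorem contDiff_innerP {f g : ℝ → ℝ × ℝ} {n : WithTop ℕ∞} (hf : ContDiff ℝ n f)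
    (hg : ContDiff ℝ n g) : ContDiff ℝ n fun s => innerP (f s) (g s) :=
  (hf.fst.mul hg.fst).add (hf.snd.mul hg.snd)

/-- A plane curve parametrised by arc length. Such a curve is differentiable, since `deriv` is zero
where there is no derivative. -/
def IsUnitSpeed (γ : ℝ → ℝ × ℝ) : Prop :=
  ∀ s, (deriv γ s).1 ^ 2 + (deriv γ s).2 ^ 2 = 1

/-- A translator for the curve diffusion flow with velocity `V`, i.e. `-κ'' = ⟨V, ν⟩`. The equation
has its meaning for `C⁴` curves parametrised by arc length. -/
def IsCurveDiffusionTranslator (V : ℝ × ℝ) (γ : ℝ → ℝ × ℝ) : Prop :=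
  ∀ s, -(deriv (deriv (curvA γ)) s) = innerP V (nuA γ s)

section Curve

variable {γ : ℝ → ℝ × ℝ} {V : ℝ × ℝ} {L k s : ℝ}

theorem periodic_nuA (hper : Function.Periodic (deriv γ) L) : Function.Periodic (nuA γ) L :=
  fun s => by simp only [nuA, hper s]

theorem periodic_curvA (hper : Function.Periodic (deriv γ) L) : Function.Periodic (curvA γ) L :=
  fun s => by simp only [curvA, periodic_deriv hper s, periodic_nuA hper s]

theorem contDiff_curvA {n : WithTop ℕ∞} (hγ : ContDiff ℝ (n + 1) (deriv γ)) :
    ContDiff ℝ n (curvA γ) := by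
  have hT : ContDiff ℝ n (deriv γ) := hγ.of_le le_self_add
  exact contDiff_innerP (contDiff_succ_iff_deriv.1 hγ).2.2 (hT.snd.prodMk hT.fst.neg)

namespace IsUnitSpeed

theorem hasDerivAt (hunit : IsUnitSpeed γ) (s : ℝ) : HasDerivAt γ (deriv γ s) s := by
  refine (differentiableAt_of_deriv_ne_zero fun h => ?_).hasDerivAt
  simpa [h] using hunit s

theorem innerP_deriv_deriv_eq_zero (hunit : IsUnitSpeed γ)
    (hT : DifferentiableAt ℝ (deriv γ) s) : innerP (deriv γ s) (deriv (deriv γ) s) = 0 := by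
  have hsq : (fun t => innerP (deriv γ t) (deriv γ t)) = fun _ => 1 :=
    funext fun t => by simpa only [innerP, sq] using hunit t
  have h := (hsq ▸ hasDerivAt_innerP hT.hasDerivAt hT.hasDerivAt).unique (hasDerivAt_const s 1)
  simp only [innerP] at h ⊢
  linarith

theorem hasDerivAt_deriv (hunit : IsUnitSpeed γ) (hT : DifferentiableAt ℝ (deriv γ) s) :
    HasDerivAt (deriv γ) (curvA γ s • nuA γ s) s := by
  have horth := hunit.innerP_deriv_deriv_eq_zero hT
  refine hT.hasDerivAt.congr_deriv (Prod.ext ?_ ?_) <;>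
    simp only [curvA, innerP, nuA, Prod.smul_fst, Prod.smul_snd, smul_eq_mul] at horth ⊢
  · linear_combination (deriv γ s).1 * horth - (deriv (deriv γ) s).1 * hunit s
  · linear_combination (deriv γ s).2 * horth - (deriv (deriv γ) s).2 * hunit s

theorem hasDerivAt_nuA (hunit : IsUnitSpeed γ) (hT : DifferentiableAt ℝ (deriv γ) s) :
    HasDerivAt (nuA γ) (-(curvA γ s • deriv γ s)) s := by
  have h := hunit.hasDerivAt_deriv hT
  have hx : HasDerivAt (fun t => (deriv γ t).1) (curvA γ s * (deriv γ s).2) s := h.fst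
  have hy : HasDerivAt (fun t => (deriv γ t).2) (curvA γ s * -(deriv γ s).1) s := h.snd
  refine (hy.prodMk hx.neg).congr_deriv (Prod.ext ?_ ?_) <;> simp

theorem eq_zero_of_innerP_eq_zero (hunit : IsUnitSpeed γ) (hT : innerP V (deriv γ s) = 0)
    (hν : innerP V (nuA γ s) = 0) : V = 0 := by
  have h := hunit s
  simp only [innerP, nuA] at hT hν
  refine Prod.ext (show V.1 = 0 from ?_) (show V.2 = 0 from ?_)
  · linear_combination (deriv γ s).1 * hT + (deriv γ s).2 * hν - V.1 * h
  · linear_combination (deriv γ s).2 * hT - (deriv γ s).1 * hν - V.2 * h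

theorem eq_zero_of_forall_innerP_nuA_eq_zero (hunit : IsUnitSpeed γ)
    (hT : DifferentiableAt ℝ (deriv γ) s) (hκ : curvA γ s ≠ 0)
    (hV : ∀ t, innerP V (nuA γ t) = 0) : V = 0 := by
  have hderiv := (hasDerivAt_innerP (hasDerivAt_const s V) (hunit.hasDerivAt_nuA hT)).unique
    (funext hV ▸ hasDerivAt_const s 0)
  have hκVT : curvA γ s * innerP V (deriv γ s) = 0 := by
    simp only [innerP, Prod.fst_neg, Prod.snd_neg, Prod.smul_fst, Prod.smul_snd, smul_eq_mul,
      Prod.fst_zero, Prod.snd_zero] at hderiv ⊢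
    linear_combination -hderiv
  exact hunit.eq_zero_of_innerP_eq_zero ((mul_eq_zero.1 hκVT).resolve_left hκ) (hV s)

theorem exists_curvA_ne_zero (hunit : IsUnitSpeed γ) (hT : Differentiable ℝ (deriv γ))
    (hper : Function.Periodic γ L) (hL : L ≠ 0) : ∃ s, curvA γ s ≠ 0 := by
  by_contra! hκ
  have hT_const : ∀ s, deriv γ s = deriv γ 0 := fun s =>
    eq_of_hasDerivAt_zero (fun t => by simpa [hκ t] using hunit.hasDerivAt_deriv (hT t)) s 0
  have hT_zero : deriv γ 0 = 0 := eq_zero_of_hasDerivAt_const_of_periodic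
    (fun s => hT_const s ▸ hunit.hasDerivAt s) hper hL
  simpa [hT_zero] using hunit 0

theorem exists_center_of_curvA_eq (hunit : IsUnitSpeed γ) (hT : Differentiable ℝ (deriv γ))
    (hk : k ≠ 0) (hκ : ∀ s, curvA γ s = k) :
    ∃ c : ℝ × ℝ, ∀ s, √(((γ s).1 - c.1) ^ 2 + ((γ s).2 - c.2) ^ 2) = |k|⁻¹ := by
  have hderiv : ∀ s, HasDerivAt (fun t => γ t + k⁻¹ • nuA γ t) 0 s := fun s => by
    refine ((hunit.hasDerivAt s).add
      ((hunit.hasDerivAt_nuA (hT s)).const_smul k⁻¹)).congr_deriv ?_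
    rw [hκ s, smul_neg, inv_smul_smul₀ hk, add_neg_cancel]
  refine ⟨γ 0 + k⁻¹ • nuA γ 0, fun s => ?_⟩
  rw [← eq_of_hasDerivAt_zero hderiv s 0, ← abs_inv, ← sqrt_sq_eq_abs]
  congr 1
  simp only [nuA, Prod.fst_add, Prod.snd_add, Prod.smul_fst, Prod.smul_snd, smul_eq_mul]
  linear_combination k⁻¹ ^ 2 * hunit s

end IsUnitSpeed

namespace IsCurveDiffusionTranslator

theorem hasDerivAt_curvA_mul_deriv_add_innerP (htrans : IsCurveDiffusionTranslator V γ)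
    (hunit : IsUnitSpeed γ) (hT : DifferentiableAt ℝ (deriv γ) s)
    (hκ : DifferentiableAt ℝ (curvA γ) s) (hκ' : DifferentiableAt ℝ (deriv (curvA γ)) s) :
    HasDerivAt (fun t => curvA γ t * deriv (curvA γ) t + innerP V (deriv γ t))
      (deriv (curvA γ) s ^ 2) s := by
  refine ((hκ.hasDerivAt.mul hκ'.hasDerivAt).add
    (hasDerivAt_innerP (hasDerivAt_const s V) (hunit.hasDerivAt_deriv hT))).congr_deriv ?_
  have h := htrans s
  simp only [innerP, Prod.smul_fst, Prod.smul_snd, smul_eq_mul, Prod.fst_zero,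
    Prod.snd_zero] at h ⊢
  linear_combination -curvA γ s * h

theorem deriv_curvA_eq_zero (htrans : IsCurveDiffusionTranslator V γ) (hunit : IsUnitSpeed γ)
    (hT : Differentiable ℝ (deriv γ)) (hκ : Differentiable ℝ (curvA γ))
    (hκ' : Differentiable ℝ (deriv (curvA γ))) (hper : Function.Periodic (deriv γ) L)
    (hL : 0 < L) (s : ℝ) : deriv (curvA γ) s = 0 := by
  have hκper := periodic_curvA hper
  have hκ'per := periodic_deriv hκper
  refine pow_eq_zero_iff two_ne_zero |>.1 <| eq_zero_of_hasDerivAt_nonneg_of_periodic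
    (fun t => htrans.hasDerivAt_curvA_mul_deriv_add_innerP hunit (hT t) (hκ t) (hκ' t))
    (fun t => sq_nonneg _) (fun t => ?_) hL s
  simp only [hκper t, hκ'per t, hper t]

end IsCurveDiffusionTranslator

theorem closed_translator_is_trivial_general (hL : 0 < L) (hγ : ContDiff ℝ 4 γ)
    (hunit : IsUnitSpeed γ) (hper : Function.Periodic γ L)
    (htrans : IsCurveDiffusionTranslator V γ) :
    V = 0 ∧ ∃ c : ℝ × ℝ, ∃ R : ℝ, 0 < R ∧
      ∀ s, √(((γ s).1 - c.1) ^ 2 + ((γ s).2 - c.2) ^ 2) = R := by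
  have hγ' : ContDiff ℝ (2 + 1) (deriv γ) := (contDiff_succ_iff_deriv (n := 3)).1 hγ |>.2.2
  have hT : Differentiable ℝ (deriv γ) := hγ'.differentiable (by simp)
  have hκ_C2 : ContDiff ℝ (1 + 1) (curvA γ) := contDiff_curvA hγ'
  have hκ : Differentiable ℝ (curvA γ) := hκ_C2.differentiable (by simp)
  have hκ'_C1 : ContDiff ℝ 1 (deriv (curvA γ)) := (contDiff_succ_iff_deriv.1 hκ_C2).2.2
  have hκ'_zero : ∀ s, deriv (curvA γ) s = 0 := htrans.deriv_curvA_eq_zero hunit hT hκ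
    (hκ'_C1.differentiable one_ne_zero) (periodic_deriv hper) hL
  have hV : ∀ s, innerP V (nuA γ s) = 0 := fun s => by
    simpa [funext hκ'_zero] using (htrans s).symm
  obtain ⟨s, hs⟩ := hunit.exists_curvA_ne_zero hT hper hL.ne'
  have hκ_const : ∀ t, curvA γ t = curvA γ s := fun t => is_const_of_deriv_eq_zero hκ hκ'_zero t s
  obtain ⟨c, hc⟩ := hunit.exists_center_of_curvA_eq hT hs hκ_const
  exact ⟨hunit.eq_zero_of_forall_innerP_nuA_eq_zero (hT s) hs hV,
    c, _, inv_pos.2 (abs_pos.2 hs), hc⟩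

end Curve

/-- a smooth closed translator for the curve diffusion flow
(`−κ'' = ⟨V, ν⟩`) is trivial: `V = 0` and the curve is a round circle. -/
theorem closed_translator_is_trivial
    (γ : ℝ → ℝ × ℝ) (L : ℝ) (hL : 0 < L)
    (hsmooth : ContDiff ℝ (⊤ : ℕ∞) γ)
    (hunit : ∀ s, (deriv γ s).1 ^ 2 + (deriv γ s).2 ^ 2 = 1)
    (hper : ∀ s, γ (s + L) = γ s)
    (V : ℝ × ℝ)
    (htrans : ∀ s, -(deriv (deriv (curvA γ)) s) = innerP V (nuA γ s)) :
    V = 0 ∧ ∃ c : ℝ × ℝ, ∃ R : ℝ, 0 < R ∧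
      ∀ s, Real.sqrt (((γ s).1 - c.1) ^ 2 + ((γ s).2 - c.2) ^ 2) = R :=
  closed_translator_is_trivial_general hL (contDiff_infty.1 hsmooth 4) hunit hper htrans
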